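/- Unfolding of useful inerts: if ufinert(p) then unf(p) is a non-variable inert term. -/

import Mathlib

/-! ## Terms of the pure λ-calculus (named syntax) -/

inductive Term : Type
  | var : ℕ → Term
  | lam : ℕ → Term → Term
  | app : Term → Term → Term
  deriving DecidableEq

namespace Term

/-- Size of a term: |x| = 1, |λx.t| = |t|+1, |t u| = |t|+|u|+1. -/
def size : Term → ℕ
  | var _ => 1
  | lam _ t => size t + 1
  | app t u => size t + size u + 1

/-- Free variables of a term. -/
def fv : Term → Finset ℕ
  | var x => {x}
  | lam x t => (fv t).erase x
  | app t u => fv t ∪ fv u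

/-- Meta-level substitution t{x←u}. -/
def subst (x : ℕ) (u : Term) : Term → Term
  | var y => if y = x then u else var y
  | lam y t => if y = x then lam y t else lam y (subst x u t)
  | app t s => app (subst x u t) (subst x u s)

def isVarB : Term → Bool
  | var _ => true
  | _ => false

/-- Values are abstractions (variables are not values). -/
def IsValue (t : Term) : Prop := ∃ x u, t = lam x u

/-- Needed variables of a term. -/
def nv : Term → Finset ℕ
  | var x => {x}
  | lam _ _ => ∅
  | app t u => nv t ∪ nv u

/-- Applied variables of a term. -/
def anv : Term → Finset ℕ
  | var _ => ∅
  | lam _ _ => ∅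
  | app (var x) u => insert x (anv u)
  | app (lam y t) u => anv (lam y t) ∪ anv u
  | app (app t s) u => anv (app t s) ∪ anv u

/-- Unapplied variables of a term. -/
def unv : Term → Finset ℕ
  | var x => {x}
  | lam _ _ => ∅
  | app (var _) u => unv u
  | app (lam y t) u => unv (lam y t) ∪ unv u
  | app (app t s) u => unv (app t s) ∪ unv u

end Term

/-! ## Inert terms and fireballs: i ::= x | i f,  f ::= v | i -/

mutual
  inductive Term.Inert : Term → Prop
    | var (x : ℕ) : Term.Inert (Term.var x)
    | app {i f : Term} : Term.Inert i → Term.Fireball f → Term.Inert (Term.app i f)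
  inductive Term.Fireball : Term → Prop
    | val {x : ℕ} {t : Term} : Term.Fireball (Term.lam x t)
    | inert {i : Term} : Term.Inert i → Term.Fireball i
end

/-- Non-variable inert terms i⁺. -/
def Term.InertPlus (t : Term) : Prop := t.Inert ∧ ∀ x, t ≠ Term.var x

/-! ## β-reduction (closure of the root rule under arbitrary term contexts) -/

inductive Beta : Term → Term → Prop
  | beta (x : ℕ) (t u : Term) : Beta (Term.app (Term.lam x t) u) (Term.subst x u t)
  | lam {t t' : Term} (x : ℕ) : Beta t t' → Beta (Term.lam x t) (Term.lam x t')
  | appL {t t' : Term} (u : Term) : Beta t t' → Beta (Term.app t u) (Term.app t' u)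
  | appR {u u' : Term} (t : Term) : Beta u u' → Beta (Term.app t u) (Term.app t u')

/-- `iterRel R n a b`: an n-step R-reduction sequence from a to b. -/
def iterRel {α : Type} (R : α → α → Prop) : ℕ → α → α → Prop
  | 0 => Eq
  | n + 1 => fun a c => ∃ b, R a b ∧ iterRel R n b c

/-! ## Environments and programs -/

/-- Environments are finite lists of explicit substitutions, written
left-to-right, i.e. E[x←t] is `E ++ [(x, t)]`. -/
abbrev Env := List (ℕ × Term)

def Env.dom (E : Env) : Finset ℕ := (E.map Prod.fst).toFinset

/-- Content of the leftmost explicit substitution on x. -/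
def Env.lookupES : Env → ℕ → Option Term
  | [], _ => none
  | (y, t) :: E, x => if y = x then some t else Env.lookupES E x

structure Program where
  tm : Term
  env : Env

/-- p@[x←u] : appending an explicit substitution at the end of the environment. -/
def Program.appES (p : Program) (x : ℕ) (u : Term) : Program := ⟨p.tm, p.env ++ [(x, u)]⟩

/-- One step of the needed-variables computation along an explicit substitution. -/
def nvStep (V : Finset ℕ) (e : ℕ × Term) : Finset ℕ :=
  if e.1 ∈ V then (V.erase e.1) ∪ Term.nv e.2 else V

/-- Needed variables of a program. -/
def Program.nv (p : Program) : Finset ℕ := p.env.foldl nvStep p.tm.nv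

/-- One step of the applied-variables computation (carrying needed variables). -/
def anvStep : Finset ℕ × Finset ℕ → ℕ × Term → Finset ℕ × Finset ℕ
  | (N, A), (x, u) =>
    (nvStep N (x, u),
      if x ∈ N then
        match u with
        | Term.var y => if x ∈ A then (A.erase x) ∪ {y} else A.erase x
        | _ => (A.erase x) ∪ Term.anv u
      else A)

/-- Applied variables of a program. -/
def Program.anv (p : Program) : Finset ℕ :=
  (p.env.foldl anvStep (p.tm.nv, p.tm.anv)).2

/-- One step of the unapplied-variables computation (carrying needed variables). -/
def unvStep : Finset ℕ × Finset ℕ → ℕ × Term → Finset ℕ × Finset ℕ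
  | (N, U), (x, u) =>
    (nvStep N (x, u),
      if x ∈ U ∨ (x ∈ N ∧ u.isVarB = false) then (U.erase x) ∪ Term.unv u else U)

/-- Unapplied variables of a program. -/
def Program.unv (p : Program) : Finset ℕ :=
  (p.env.foldl unvStep (p.tm.nv, p.tm.unv)).2

/-- Unfolding of a program into a term: unf(t, ε) = t, unf(t, E[x←u]) = unf(t, E){x←u}. -/
def Program.unf (p : Program) : Term :=
  p.env.foldl (fun s e => Term.subst e.1 e.2 s) p.tm

/-! ## Term contexts H ::= ⟨·⟩ | H t | i H (i inert, enforced by WF) -/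

inductive HCtx : Type
  | hole : HCtx
  | appL : HCtx → Term → HCtx
  | appR : Term → HCtx → HCtx

namespace HCtx

/-- Well-formedness: in i H, the left part i must be an inert term. -/
def WF : HCtx → Prop
  | hole => True
  | appL H _ => WF H
  | appR i H => Term.Inert i ∧ WF H

def plug : HCtx → Term → Term
  | hole, t => t
  | appL H u, t => Term.app (plug H t) u
  | appR i H, t => Term.app i (plug H t)

def nv : HCtx → Finset ℕ
  | hole => ∅
  | appL H _ => nv H
  | appR i H => Term.nv i ∪ nv H

def anv : HCtx → Finset ℕ
  | hole => ∅
  | appL H _ => anv H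
  | appR i H => Term.anv i ∪ anv H

def unv : HCtx → Finset ℕ
  | hole => ∅
  | appL H _ => unv H
  | appR i H => Term.unv i ∪ unv H

end HCtx

/-- Applicative term contexts H@ ::= ⟨·⟩ t | H@ t | i H@. -/
inductive HCtx.IsApp : HCtx → Prop
  | base (t : Term) : HCtx.IsApp (HCtx.appL HCtx.hole t)
  | appL {H : HCtx} (t : Term) : HCtx.IsApp H → HCtx.IsApp (HCtx.appL H t)
  | appR {H : HCtx} {i : Term} : Term.Inert i → HCtx.IsApp H → HCtx.IsApp (HCtx.appR i H)

/-! ## Program contexts: hole in the term part (tc) or inside an ES (ec) -/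

inductive PCtx : Type
  | tc : HCtx → Env → PCtx
  | ec : Term → Env → ℕ → HCtx → Env → PCtx

namespace PCtx

/-- P@[x←u] : appending an explicit substitution at the end of the environment of P. -/
def appES : PCtx → ℕ → Term → PCtx
  | tc H E, x, u => tc H (E ++ [(x, u)])
  | ec t E1 y H E2, x, u => ec t E1 y H (E2 ++ [(x, u)])

/-- Plugging a term into a program context. -/
def plugT : PCtx → Term → Program
  | tc H E, t => ⟨H.plug t, E⟩
  | ec u E1 x H E2, t => ⟨u, E1 ++ (x, H.plug t) :: E2⟩

/-- Plugging a program into a program context: the plugged environment is appended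
right after the position of the hole. -/
def plugP : PCtx → Program → Program
  | tc H E, q => ⟨H.plug q.tm, q.env ++ E⟩
  | ec u E1 x H E2, q => ⟨u, E1 ++ (x, H.plug q.tm) :: (q.env ++ E2)⟩

/-- Variables bound by the environment of P. -/
def dom : PCtx → Finset ℕ
  | tc _ E => Env.dom E
  | ec _ E1 y _ E2 => insert y (Env.dom E1 ∪ Env.dom E2)

/-- P(x): content of the leftmost explicit substitution on x occurring after the hole. -/
def lookup : PCtx → ℕ → Option Term
  | tc _ E, x => Env.lookupES E x
  | ec _ _ _ _ E2, x => Env.lookupES E2 x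

/-- (P⟨x⟩)@[x←H] : plug the variable x in the hole of P and append the ES [x←H],
whose content H now contains the hole. -/
def hered (P : PCtx) (x : ℕ) (H : HCtx) : PCtx :=
  ec (P.plugT (Term.var x)).tm (P.plugT (Term.var x)).env x H []

end PCtx

/-! ## Open CbNeed evaluation contexts P ∈ E_V -/

inductive OEC : PCtx → Finset ℕ → Prop
  | ax {H : HCtx} : H.WF → OEC (PCtx.tc H []) H.nv
  | gc {P : PCtx} {V : Finset ℕ} {x : ℕ} (t : Term) :
      OEC P V → x ∉ V → x ∉ P.dom → OEC (P.appES x t) V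
  | inert {P : PCtx} {V : Finset ℕ} {x : ℕ} {i : Term} :
      OEC P V → x ∈ V → Term.Inert i → x ∉ P.dom →
      OEC (P.appES x i) ((V.erase x) ∪ i.nv)
  | her {P : PCtx} {V : Finset ℕ} {x : ℕ} {H : HCtx} :
      OEC P V → x ∉ V → x ∉ P.dom → H.WF →
      OEC (P.hered x H) (V ∪ H.nv)

/-! ## Open CbNeed reduction -/

inductive StepOM : Program → Program → Prop
  | mk {P : PCtx} {V : Finset ℕ} {x : ℕ} {t u : Term} :
      OEC P V →
      StepOM (P.plugT (Term.app (Term.lam x t) u)) (P.plugP ⟨t, [(x, u)]⟩)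

inductive StepOE : Program → Program → Prop
  | mk {P : PCtx} {V : Finset ℕ} {x : ℕ} {v : Term} :
      OEC P V → P.lookup x = some v → v.IsValue →
      StepOE (P.plugT (Term.var x)) (P.plugT v)

def StepOnd (p q : Program) : Prop := StepOM p q ∨ StepOE p q

/-! ## Open CbNeed normal programs -/

inductive PInert : Program → Prop
  | ax {i : Term} : i.Inert → PInert ⟨i, []⟩
  | inert {p : Program} {x : ℕ} {i : Term} :
      PInert p → x ∈ p.nv → i.Inert → PInert (p.appES x i)
  | gc {p : Program} {x : ℕ} (t : Term) :
      PInert p → x ∉ p.nv → PInert (p.appES x t)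

inductive PAbs : Program → Prop
  | ax {v : Term} : v.IsValue → PAbs ⟨v, []⟩
  | gc {p : Program} {x : ℕ} (t : Term) : PAbs p → PAbs (p.appES x t)

def ONorm (p : Program) : Prop := PInert p ∨ PAbs p

/-! ## Useful Open CbNeed: multiplicative and exponential evaluation contexts -/

def upd (S : Finset ℕ) (x y : ℕ) : Finset ℕ := if x ∈ S then (S.erase x) ∪ {y} else S

inductive MEC : PCtx → Finset ℕ → Finset ℕ → Prop
  | ax {H : HCtx} : H.WF → MEC (PCtx.tc H []) H.unv H.anv
  | var {P : PCtx} {U A : Finset ℕ} {x y : ℕ} :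
      MEC P U A → x ∈ U ∪ A → x ∉ P.dom →
      MEC (P.appES x (Term.var y)) (upd U x y) (upd A x y)
  | gc {P : PCtx} {U A : Finset ℕ} {x : ℕ} (t : Term) :
      MEC P U A → x ∉ U ∪ A → x ∉ P.dom → MEC (P.appES x t) U A
  | inert {P : PCtx} {U A : Finset ℕ} {x : ℕ} {i : Term} :
      MEC P U A → x ∈ U ∪ A → i.InertPlus → x ∉ P.dom →
      MEC (P.appES x i) ((U.erase x) ∪ i.unv) ((A.erase x) ∪ i.anv)
  | val {P : PCtx} {U A : Finset ℕ} {x : ℕ} {v : Term} :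
      MEC P U A → x ∈ U → x ∉ A → v.IsValue → x ∉ P.dom →
      MEC (P.appES x v) (U.erase x) A
  | her {P : PCtx} {U A : Finset ℕ} {x : ℕ} {H : HCtx} :
      MEC P U A → x ∉ U ∪ A → x ∉ P.dom → H.WF →
      MEC (P.hered x H) (U ∪ H.unv) (A ∪ H.anv)

/-- Exponential evaluation contexts P ∈ E@_{U,A}; the last (natural number) index
counts the number of applications of rule (e_NA) in the derivation. -/
inductive EEC : PCtx → Finset ℕ → Finset ℕ → ℕ → Prop
  | ax1 {H : HCtx} : H.IsApp → EEC (PCtx.tc H []) H.unv H.anv 0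
  | ax2 {P : PCtx} {U A : Finset ℕ} {x : ℕ} {H : HCtx} :
      MEC P U A → x ∉ U ∪ A → x ∉ P.dom → H.IsApp →
      EEC (P.hered x H) ((U.erase x) ∪ H.unv) (A ∪ H.anv) 0
  | var {P : PCtx} {U A : Finset ℕ} {k : ℕ} {x y : ℕ} :
      EEC P U A k → x ∈ U ∪ A → x ∉ P.dom →
      EEC (P.appES x (Term.var y)) (upd U x y) (upd A x y) k
  | inert {P : PCtx} {U A : Finset ℕ} {k : ℕ} {x : ℕ} {i : Term} :
      EEC P U A k → x ∈ U ∪ A → i.InertPlus → x ∉ P.dom →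
      EEC (P.appES x i) ((U.erase x) ∪ i.unv) ((A.erase x) ∪ i.anv) k
  | gc {P : PCtx} {U A : Finset ℕ} {k : ℕ} {x : ℕ} (t : Term) :
      EEC P U A k → x ∉ U ∪ A → x ∉ P.dom → EEC (P.appES x t) U A k
  | val {P : PCtx} {U A : Finset ℕ} {k : ℕ} {x : ℕ} {v : Term} :
      EEC P U A k → x ∈ U → x ∉ A → v.IsValue → x ∉ P.dom →
      EEC (P.appES x v) (U.erase x) A k
  | na {P : PCtx} {U A : Finset ℕ} {k : ℕ} {x : ℕ} :
      EEC P U A k → x ∉ A → x ∉ P.dom →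
      EEC (P.hered x HCtx.hole) (U.erase x) A (k + 1)

/-! ## Useful Open CbNeed reduction -/

inductive StepUM : Program → Program → Prop
  | mk {P : PCtx} {U A : Finset ℕ} {x : ℕ} {t u : Term} :
      MEC P U A →
      StepUM (P.plugT (Term.app (Term.lam x t) u)) (P.plugP ⟨t, [(x, u)]⟩)

inductive StepUE : Program → Program → Prop
  | mk {P : PCtx} {U A : Finset ℕ} {k : ℕ} {x : ℕ} {v : Term} :
      EEC P U A k → P.lookup x = some v → v.IsValue →
      StepUE (P.plugT (Term.var x)) (P.plugT v)

def StepUnd (p q : Program) : Prop := StepUM p q ∨ StepUE p q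

/-- Useful multiplicative steps whose evaluation context lies in Em_{U,A}. -/
def StepUMat (U A : Finset ℕ) (p q : Program) : Prop :=
  ∃ (P : PCtx) (x : ℕ) (t u : Term), MEC P U A ∧
    p = P.plugT (Term.app (Term.lam x t) u) ∧ q = P.plugP ⟨t, [(x, u)]⟩

/-- Useful exponential steps whose evaluation context lies in E@_{U,A}. -/
def StepUEat (U A : Finset ℕ) (p q : Program) : Prop :=
  ∃ (P : PCtx) (k : ℕ) (x : ℕ) (v : Term), EEC P U A k ∧
    P.lookup x = some v ∧ v.IsValue ∧
    p = P.plugT (Term.var x) ∧ q = P.plugT v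

/-! ## Useful normal-form predicates -/

inductive GenVar : ℕ → Program → Prop
  | ax (x : ℕ) : GenVar x ⟨Term.var x, []⟩
  | her {x : ℕ} {p : Program} (y : ℕ) : GenVar x p → GenVar y (p.appES x (Term.var y))
  | gc {x z : ℕ} {p : Program} (t : Term) : GenVar x p → z ≠ x → GenVar x (p.appES z t)

inductive UfAbs : Program → Prop
  | ax {v : Term} : v.IsValue → UfAbs ⟨v, []⟩
  | gv {p : Program} {x : ℕ} {v : Term} : GenVar x p → v.IsValue → UfAbs (p.appES x v)
  | gc {p : Program} {x : ℕ} (t : Term) : UfAbs p → UfAbs (p.appES x t)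

inductive UfInert : Program → Prop
  | ax {i : Term} : i.InertPlus → UfInert ⟨i, []⟩
  | gv {p : Program} {x : ℕ} {i : Term} : GenVar x p → i.InertPlus → UfInert (p.appES x i)
  | inert {p : Program} {x : ℕ} {i : Term} :
      UfInert p → x ∈ p.nv → i.Inert → UfInert (p.appES x i)
  | useless {p : Program} {x : ℕ} {v : Term} :
      UfInert p → x ∈ p.unv → x ∉ p.anv → v.IsValue → UfInert (p.appES x v)
  | gc {p : Program} {x : ℕ} (t : Term) : UfInert p → x ∉ p.nv → UfInert (p.appES x t)

def UfNorm (p : Program) : Prop := UfInert p ∨ UfAbs p ∨ ∃ x, GenVar x p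

/-! ## The size-exploding family -/

/-- t₁ := λx.λy. y x x  (x := 0, y := 1). -/
def t1 : Term := Term.lam 0 (Term.lam 1 (Term.app (Term.app (Term.var 1) (Term.var 0)) (Term.var 0)))

/-- λy. y x x. -/
def tbody : Term := Term.lam 1 (Term.app (Term.app (Term.var 1) (Term.var 0)) (Term.var 0))

/-- The family t_n (values for n ≥ 1; tfam 0 is a dummy). -/
def tfam : ℕ → Term
  | 0 => t1
  | 1 => t1
  | n + 2 => Term.lam 0 (Term.app (tfam (n + 1)) tbody)

/-- I := λz.z. -/
def Idt : Term := Term.lam 2 (Term.var 2)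

/-- The family u_n : u₀ = I, u_{n+1} = λy. y u_n u_n. -/
def ufam : ℕ → Term
  | 0 => Idt
  | n + 1 => Term.lam 1 (Term.app (Term.app (Term.var 1) (ufam n)) (ufam n))

theorem nv_subst (x : ℕ) (u t : Term) (z : ℕ) :
    z ∈ (Term.subst x u t).nv ↔ (z ≠ x ∧ z ∈ t.nv) ∨ (x ∈ t.nv ∧ z ∈ u.nv) := by
  induction t with
  | var y =>
    by_cases h : y = x
    · subst h; simp [Term.subst, Term.nv]
    · have h' : ¬ x = y := fun e => h e.symm
      simp [Term.subst, Term.nv, h, h']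
      rintro rfl; exact h
  | lam y t ih =>
    by_cases h : y = x <;> simp [Term.subst, Term.nv, h]
  | app a b iha ihb =>
    simp only [Term.subst, Term.nv, Finset.mem_union, iha, ihb]
    tauto

theorem anv_sub_nv (t : Term) (z : ℕ) : z ∈ t.anv → z ∈ t.nv := by
  induction t with
  | var y => simp [Term.anv]
  | lam y t ih => simp [Term.anv]
  | app a b iha ihb =>
    cases a <;> simp [Term.anv, Term.nv] at * <;> tauto

theorem anv_app (a b : Term) (z : ℕ) :
    z ∈ (Term.app a b).anv ↔ a = Term.var z ∨ z ∈ a.anv ∨ z ∈ b.anv := by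
  cases a <;> simp [Term.anv, eq_comm]

theorem subst_eq_var (x : ℕ) (u t : Term) (z : ℕ) :
    Term.subst x u t = Term.var z ↔
      (t = Term.var x ∧ u = Term.var z) ∨ (z ≠ x ∧ t = Term.var z) := by
  cases t with
  | var y =>
    by_cases h : y = x
    · subst h; simp [Term.subst]; tauto
    · simp [Term.subst, h]; rintro rfl; exact h
  | lam y t => by_cases h : y = x <;> simp [Term.subst, h]
  | app a b => simp [Term.subst]

theorem anv_subst (x : ℕ) (u t : Term) (z : ℕ) :
    z ∈ (Term.subst x u t).anv ↔ (z ≠ x ∧ z ∈ t.anv) ∨ (x ∈ t.nv ∧ z ∈ u.anv) ∨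
      (x ∈ t.anv ∧ u = Term.var z) := by
  induction t with
  | var y =>
    by_cases h : y = x
    · subst h; simp [Term.subst, Term.nv, Term.anv]
    · have h' : ¬ x = y := fun e => h e.symm
      simp [Term.subst, Term.nv, Term.anv, h, h']
  | lam y t ih =>
    by_cases h : y = x <;> simp [Term.subst, Term.nv, Term.anv, h]
  | app a b iha ihb =>
    rw [Term.subst, anv_app, anv_app, anv_app, iha, ihb, subst_eq_var]
    simp only [Term.nv, Finset.mem_union]
    clear iha ihb
    generalize (a = Term.var x) = p1, (a = Term.var z) = p2, (u = Term.var z) = p3,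
      (z ≠ x) = p4, (z ∈ a.anv) = p5, (x ∈ a.anv) = p6, (z ∈ b.anv) = p7,
      (x ∈ b.anv) = p8, (x ∈ a.nv) = p9, (x ∈ b.nv) = p10, (z ∈ u.anv) = p11
    grind

theorem nv_step (x : ℕ) (u t : Term) : nvStep t.nv (x, u) = (Term.subst x u t).nv := by
  ext z
  rw [nv_subst]
  unfold nvStep
  by_cases h : x ∈ t.nv
  · simp [h]
  · simp only [h, if_false, false_and, or_false]
    exact ⟨fun hz => ⟨fun e => h (e ▸ hz), hz⟩, fun hz => hz.2⟩

theorem anv_step (x : ℕ) (u t : Term) :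
    anvStep (t.nv, t.anv) (x, u) = ((Term.subst x u t).nv, (Term.subst x u t).anv) := by
  refine Prod.ext (nv_step x u t) ?_
  ext z
  rw [anv_subst]
  have hs := anv_sub_nv t x
  by_cases h : x ∈ t.nv
  · cases u with
    | var y =>
      by_cases hA : x ∈ t.anv
      · simp [anvStep, h, hA, Term.anv, eq_comm]; tauto
      · simp [anvStep, h, hA, Term.anv]
        rintro hz rfl; exact hA hz
    | lam y s => simp [anvStep, h]
    | app a b => simp [anvStep, h]
  · have hA : x ∉ t.anv := fun e => h (hs e)
    simp only [anvStep, h, hA, if_false, false_and, or_false]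
    exact ⟨fun hz => ⟨fun e => hA (e ▸ hz), hz⟩, fun hz => hz.2⟩

theorem nv_unf (p : Program) : p.nv = p.unf.nv := by
  obtain ⟨t, E⟩ := p
  simp only [Program.nv, Program.unf]
  induction E generalizing t with
  | nil => rfl
  | cons e E ih =>
    rw [List.foldl_cons, List.foldl_cons, ← ih]
    exact congrArg (fun q => List.foldl nvStep q E) (nv_step e.1 e.2 t)

theorem anv_unf (p : Program) : p.anv = p.unf.anv := by
  obtain ⟨t, E⟩ := p
  simp only [Program.anv, Program.unf]
  induction E generalizing t with
  | nil => rfl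
  | cons e E ih =>
    rw [List.foldl_cons, List.foldl_cons, ← ih]
    exact congrArg (fun q => (List.foldl anvStep q E).2) (anv_step e.1 e.2 t)

theorem unf_appES (p : Program) (x : ℕ) (u : Term) :
    (p.appES x u).unf = Term.subst x u p.unf := by
  simp [Program.unf, Program.appES]

theorem genVar_unf {x : ℕ} {p : Program} (h : GenVar x p) : p.unf = Term.var x := by
  induction h with
  | ax x => rfl
  | her y _ ih => rw [unf_appES, ih]; simp [Term.subst]
  | gc t _ hz ih => rw [unf_appES, ih]; simp [Term.subst, hz.symm]

/-- Fireballs, by cases. -/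
theorem fireball_cases {t : Term} (h : t.Fireball) : t.IsValue ∨ t.Inert := by
  cases h with
  | val => exact Or.inl ⟨_, _, rfl⟩
  | inert h => exact Or.inr h

theorem fireball_subst_value {x y : ℕ} {s u : Term} :
    (Term.subst x u (Term.lam y s)).Fireball := by
  by_cases h : y = x
  · simp only [Term.subst, h, if_true]; exact Term.Fireball.val
  · simp only [Term.subst, h, if_false]; exact Term.Fireball.val

theorem inert_subst (x : ℕ) (u t : Term) (hu : x ∈ t.nv → u.Inert) :
    t.Inert → (Term.subst x u t).Inert := by
  induction t with
  | var y =>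
    intro _
    by_cases h : y = x
    · subst h; simpa [Term.subst] using hu (by simp [Term.nv])
    · simpa [Term.subst, h] using Term.Inert.var y
  | lam y s ih => intro h; cases h
  | app a b iha ihb =>
    intro h
    simp only [Term.nv, Finset.mem_union] at hu
    cases h with
    | app ha hb =>
      refine Term.Inert.app (iha (fun h => hu (Or.inl h)) ha) ?_
      rcases fireball_cases hb with ⟨y, s, rfl⟩ | hb
      · exact fireball_subst_value
      · exact Term.Fireball.inert (ihb (fun h => hu (Or.inr h)) hb)

theorem useless_subst (x : ℕ) (v t : Term) (hv : v.IsValue) (hx : x ∉ t.anv) :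
    t.Inert → t = Term.var x ∨ (Term.subst x v t).Inert := by
  induction t with
  | var y =>
    intro _
    by_cases h : y = x
    · exact Or.inl (h ▸ rfl)
    · right; simpa [Term.subst, h] using Term.Inert.var y
  | lam y s ih => intro h; cases h
  | app a b iha ihb =>
    intro h
    rw [anv_app] at hx
    push Not at hx
    obtain ⟨h1, h2, h3⟩ := hx
    cases h with
    | app ha hb =>
      right
      refine Term.Inert.app ((iha h2 ha).resolve_left h1) ?_
      rcases fireball_cases hb with ⟨y, s, rfl⟩ | hb
      · exact fireball_subst_value
      · rcases ihb h3 hb with rfl | hb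
        · obtain ⟨y, s, rfl⟩ := hv
          simp only [Term.subst, if_true]; exact Term.Fireball.val
        · exact Term.Fireball.inert hb

theorem subst_not_var {x : ℕ} {u t : Term} (h : ∀ z, t ≠ Term.var z) :
    ∀ z, Term.subst x u t ≠ Term.var z := by
  intro z e
  rw [subst_eq_var] at e
  rcases e with e | e
  · exact h _ e.1
  · exact h _ e.2

/-- unfolding of useful inerts. -/
theorem ufinert_unfolds_to_inertplus :
    ∀ p : Program, UfInert p → p.unf.InertPlus := by
  intro p h
  induction h with
  | ax h => exact h
  | gv hg hi => rw [unf_appES, genVar_unf hg]; simpa [Term.subst] using hi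
  | inert _ _ hi ih =>
    rw [unf_appES]
    exact ⟨inert_subst _ _ _ (fun _ => hi) ih.1, subst_not_var ih.2⟩
  | useless _ _ ha hv ih =>
    rw [unf_appES]
    rw [anv_unf] at ha
    exact ⟨(useless_subst _ _ _ hv ha ih.1).resolve_left (ih.2 _), subst_not_var ih.2⟩
  | gc t _ hx ih =>
    rw [unf_appES]
    rw [nv_unf] at hx
    exact ⟨inert_subst _ _ _ (fun h => absurd h hx) ih.1, subst_not_var ih.2⟩
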